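/- arXiv:2402.09887 — 2 statements merged into one kernel-verified Lean document; each statement's English description precedes it below -/
import Mathlib

section
/- Define elements P^{(n)} ∈ TL^A_n recursively by P^{(1)} = 1 and P^{(n+1)} = P^{(n)} + ([n]/[n+1])·P^{(n)} e_n P^{(n)}, where P^{(n)} is viewed in TL^A_{n+1} via the natural inclusion. Then for every n ≥ 1 the element P^{(n)} satisfies P^{(n)} ≠ 0, P^{(n)}·P^{(n)} = P^{(n)}, and e_i·P^{(n)} = P^{(n)}·e_i = 0 for all 1 ≤ i ≤ n−1; hence P^{(n)} is the Jones–Wenzl projection. -/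
noncomputable section
open scoped Classical

/-! ### The field `ℂ(q)` and quantum integers -/

/-- The field `ℂ(q)` of rational functions in one variable `q`. -/
abbrev 𝕂 : Type := RatFunc ℂ

/-- The variable `q`. -/
def qA : 𝕂 := RatFunc.X

/-- The quantum integer `[n] = (q^n - q^{-n})/(q - q^{-1})`. -/
def qInt (n : ℤ) : 𝕂 := (qA ^ n - qA⁻¹ ^ n) / (qA - qA⁻¹)

/-! ### The Temperley–Lieb algebra of type A and the Jones–Wenzl projections -/

/-- Defining relations of the Temperley–Lieb algebra `TL^A_{m+1}`.
The generator indexed by `i : Fin m` represents `e_{i+1}` (so the generators are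
`e_1, …, e_m`): `e_i² = -[2] e_i`, `e_i e_j e_i = e_i` for `|i-j| = 1`, and
`e_i e_j = e_j e_i` for `|i-j| > 1`. -/
inductive TLArel (m : ℕ) : FreeAlgebra 𝕂 (Fin m) → FreeAlgebra 𝕂 (Fin m) → Prop
  | sq (i : Fin m) :
      TLArel m (FreeAlgebra.ι 𝕂 i * FreeAlgebra.ι 𝕂 i) ((-(qA + qA⁻¹)) • FreeAlgebra.ι 𝕂 i)
  | braid (i j : Fin m) (h : (j : ℕ) = i + 1 ∨ (i : ℕ) = j + 1) :
      TLArel m (FreeAlgebra.ι 𝕂 i * FreeAlgebra.ι 𝕂 j * FreeAlgebra.ι 𝕂 i) (FreeAlgebra.ι 𝕂 i)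
  | comm (i j : Fin m) (h : (i : ℕ) + 1 < j ∨ (j : ℕ) + 1 < i) :
      TLArel m (FreeAlgebra.ι 𝕂 i * FreeAlgebra.ι 𝕂 j) (FreeAlgebra.ι 𝕂 j * FreeAlgebra.ι 𝕂 i)

/-- The Temperley–Lieb algebra of type A with `m` generators `e_1, …, e_m`,
i.e. the algebra `TL^A_{m+1}` on `m+1` strands. -/
abbrev TLA (m : ℕ) : Type := RingQuot (TLArel m)

/-- The generator `e_{i+1}` of `TL^A_{m+1}`. -/
def EA {m : ℕ} (i : Fin m) : TLA m := RingQuot.mkAlgHom 𝕂 (TLArel m) (FreeAlgebra.ι 𝕂 i)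

/-- The natural inclusion `TL^A_{m+1} → TL^A_{m+2}`, sending `e_i` to `e_i`. -/
def TLAincl (m : ℕ) : TLA m →ₐ[𝕂] TLA (m + 1) :=
  RingQuot.liftAlgHom 𝕂
    ⟨FreeAlgebra.lift 𝕂 (fun i => EA i.castSucc), by
      intro x y h
      induction h with
      | sq i =>
          have h2 := RingQuot.mkAlgHom_rel 𝕂 (TLArel.sq i.castSucc)
          simp only [map_mul, map_smul, FreeAlgebra.lift_ι_apply, EA] at h2 ⊢
          exact h2
      | braid i j h =>
          have h2 := RingQuot.mkAlgHom_rel 𝕂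
            (TLArel.braid i.castSucc j.castSucc (by simpa using h))
          simp only [map_mul, FreeAlgebra.lift_ι_apply, EA] at h2 ⊢
          exact h2
      | comm i j h =>
          have h2 := RingQuot.mkAlgHom_rel 𝕂
            (TLArel.comm i.castSucc j.castSucc (by simpa using h))
          simp only [map_mul, FreeAlgebra.lift_ι_apply, EA] at h2 ⊢
          exact h2⟩

/-- The Jones–Wenzl projection `P^{(m+1)} ∈ TL^A_{m+1}`, defined via Wenzl's recurrence
`P^{(1)} = 1` and `P^{(n+1)} = P^{(n)} + ([n]/[n+1]) P^{(n)} e_n P^{(n)}`.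
Thus `JW m` is the projection `P^{(m+1)}` and `P^{(n)} = JW (n-1)`. -/
def JW : (m : ℕ) → TLA m
  | 0 => 1
  | m + 1 =>
      TLAincl m (JW m) +
        (qInt (m + 1) / qInt (m + 2)) •
          (TLAincl m (JW m) * EA (Fin.last m) * TLAincl m (JW m))

/-!
Write `P_n` for `P^{(n)}` and `c_n = [n]/[n+1]`. The induction is driven by the partial trace
identity `e_n P_n e_n = -([n+1]/[n]) P_{n-1} e_n`, where `P_{n-1}` commutes with `e_n`. Its factor
is `-1/c_n`, so the two terms of `e_n P_{n+1} = e_n P_n + c_n e_n P_n e_n P_n` cancel. Sandwiching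
the recursion for `P_{n+1}` between two copies of `e_{n+1}` gives the next partial trace identity,
with the factor `c_n - [2] = -[n+2]/[n+1]`. Finally `P_n ≠ 0` because the algebra map to `ℂ(q)`
that kills all generators sends `P_n` to `1`.
-/

section WenzlStep

variable {k A B : Type*} [CommRing k] [Ring A] [Algebra k A] [Ring B] [Algebra k B]
  {c δ : k} {p q e f : A}

/-- One step `p ↦ p + c p e p` of Wenzl's recursion, in an arbitrary algebra. -/
def wenzlStep (c : k) (p e : A) : A := p + c • (p * e * p)

theorem map_wenzlStep (φ : A →ₐ[k] B) (c : k) (p e : A) :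
    φ (wenzlStep c p e) = wenzlStep c (φ p) (φ e) := by
  simp only [wenzlStep, map_add, map_smul, map_mul]

theorem mul_wenzlStep (hp : IsIdempotentElem p) : p * wenzlStep c p e = wenzlStep c p e := by
  simp only [wenzlStep, mul_add, mul_smul_comm, ← mul_assoc, hp.eq]

theorem wenzlStep_mul (hp : IsIdempotentElem p) : wenzlStep c p e * p = wenzlStep c p e := by
  simp only [wenzlStep, add_mul, smul_mul_assoc, mul_assoc, hp.eq]

theorem generator_mul_wenzlStep (hqe : Commute q e) (hqp : q * p = p)
    (hepe : c • (e * p * e) = -(q * e)) : e * wenzlStep c p e = 0 :=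
  calc e * wenzlStep c p e = e * p + c • (e * p * e) * p := by
        simp only [wenzlStep, mul_add, mul_smul_comm, smul_mul_assoc, mul_assoc]
    _ = e * p - e * (q * p) := by rw [hepe, hqe.eq, neg_mul, mul_assoc, sub_eq_add_neg]
    _ = 0 := by rw [hqp, sub_self]

theorem wenzlStep_mul_generator (hpq : p * q = p) (hepe : c • (e * p * e) = -(q * e)) :
    wenzlStep c p e * e = 0 :=
  calc wenzlStep c p e * e = p * e + p * c • (e * p * e) := by
        simp only [wenzlStep, add_mul, mul_smul_comm, smul_mul_assoc, mul_assoc]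
    _ = p * e - p * q * e := by rw [hepe, mul_neg, ← mul_assoc, sub_eq_add_neg]
    _ = 0 := by rw [hpq, sub_self]

theorem isIdempotentElem_wenzlStep (hp : IsIdempotentElem p) (he : e * wenzlStep c p e = 0) :
    IsIdempotentElem (wenzlStep c p e) :=
  calc wenzlStep c p e * wenzlStep c p e
      = p * wenzlStep c p e + c • (p * e * (p * wenzlStep c p e)) := by
        conv_lhs => enter [1]; rw [wenzlStep]
        simp only [add_mul, smul_mul_assoc, mul_assoc]
    _ = wenzlStep c p e := by
        rw [mul_wenzlStep hp, mul_assoc, he, mul_zero, smul_zero, add_zero]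

theorem mul_wenzlStep_mul_of_commute (hp : IsIdempotentElem p) (hpf : Commute p f)
    (hfef : f * e * f = f) (hff : f * f = -δ • f) :
    f * wenzlStep c p e * f = (c - δ) • (p * f) := by
  have hfpf : f * p * f = -δ • (p * f) := by rw [← hpf.eq, mul_assoc, hff, mul_smul_comm]
  have hfpepf : f * (p * e * p) * f = p * f :=
    calc f * (p * e * p) * f = f * p * e * (p * f) := by simp only [mul_assoc]
      _ = p * f * e * (f * p) := congrArg₂ (· * e * ·) hpf.eq.symm hpf.eq
      _ = p * (f * e * f) * p := by simp only [mul_assoc]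
      _ = p * f := by rw [hfef, mul_assoc, ← hpf.eq, ← mul_assoc, hp.eq]
  rw [wenzlStep, mul_add, add_mul, mul_smul_comm, smul_mul_assoc, hfpf, hfpepf, ← add_smul,
    neg_add_eq_sub]

end WenzlStep

theorem ratFunc_X_zpow_injective (F : Type*) [Field F] :
    Function.Injective fun n : ℤ ↦ (RatFunc.X : RatFunc F) ^ n := fun m n h ↦ by
  simpa only [RatFunc.inftyValuation.X_zpow, WithZero.exp_inj] using
    congrArg (RatFunc.inftyValuation F) h

theorem qA_ne_zero : qA ≠ 0 := RatFunc.X_ne_zero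

theorem qA_zpow_sub_inv_zpow_ne_zero {n : ℤ} (hn : n ≠ 0) : qA ^ n - qA⁻¹ ^ n ≠ 0 := by
  rw [inv_zpow', sub_ne_zero]
  exact (ratFunc_X_zpow_injective ℂ).ne (by lia)

theorem qA_sub_inv_ne_zero : qA - qA⁻¹ ≠ 0 := by
  simpa only [zpow_one] using qA_zpow_sub_inv_zpow_ne_zero one_ne_zero

theorem qInt_ne_zero {n : ℤ} (hn : n ≠ 0) : qInt n ≠ 0 :=
  div_ne_zero (qA_zpow_sub_inv_zpow_ne_zero hn) qA_sub_inv_ne_zero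

theorem qInt_one : qInt 1 = 1 := by
  rw [qInt, zpow_one, zpow_one, div_self qA_sub_inv_ne_zero]

theorem qInt_two : qInt 2 = qA + qA⁻¹ := by
  rw [qInt, div_eq_iff qA_sub_inv_ne_zero]
  norm_cast
  ring

theorem qInt_add_two (n : ℤ) : qInt (n + 2) = (qA + qA⁻¹) * qInt (n + 1) - qInt n := by
  have hq := qA_ne_zero
  have hinv : qA * qA⁻¹ = 1 := mul_inv_cancel₀ hq
  rw [qInt, qInt, qInt, ← mul_div_assoc, ← sub_div, show n + 2 = n + 1 + 1 by ring]
  congr 1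
  simp only [zpow_add_one₀ hq, zpow_add_one₀ (inv_ne_zero hq)]
  linear_combination (-qA ^ n + qA⁻¹ ^ n) * hinv

theorem qInt_div_sub_two {n : ℤ} (hn : n + 1 ≠ 0) :
    qInt n / qInt (n + 1) - (qA + qA⁻¹) = -(qInt (n + 2) / qInt (n + 1)) := by
  have := qInt_ne_zero hn
  rw [qInt_add_two]
  field_simp
  ring

theorem EA_mul_self {m : ℕ} (i : Fin m) : EA i * EA i = -(qA + qA⁻¹) • EA i := by
  simpa only [EA, map_mul, map_smul] using RingQuot.mkAlgHom_rel 𝕂 (TLArel.sq i)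

theorem EA_mul_EA_mul_EA {m : ℕ} {i j : Fin m} (h : (j : ℕ) = i + 1 ∨ (i : ℕ) = j + 1) :
    EA i * EA j * EA i = EA i := by
  simpa only [EA, map_mul] using RingQuot.mkAlgHom_rel 𝕂 (TLArel.braid i j h)

theorem commute_EA {m : ℕ} {i j : Fin m} (h : (i : ℕ) + 1 < j ∨ (j : ℕ) + 1 < i) :
    Commute (EA i) (EA j) := by
  simpa only [Commute, SemiconjBy, EA, map_mul] using RingQuot.mkAlgHom_rel 𝕂 (TLArel.comm i j h)

theorem adjoin_range_EA (m : ℕ) : Algebra.adjoin 𝕂 (Set.range (EA (m := m))) = ⊤ := by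
  have hrange : Set.range (EA (m := m)) =
      RingQuot.mkAlgHom 𝕂 (TLArel m) '' Set.range (FreeAlgebra.ι 𝕂) := Set.range_comp _ _
  rw [hrange, ← AlgHom.map_adjoin, FreeAlgebra.adjoin_range_ι, Algebra.map_top,
    AlgHom.range_eq_top]
  exact RingQuot.mkAlgHom_surjective 𝕂 (TLArel m)

theorem TLAincl_EA {m : ℕ} (i : Fin m) : TLAincl m (EA i) = EA i.castSucc := by
  rw [TLAincl, EA, RingQuot.liftAlgHom_mkAlgHom_apply, FreeAlgebra.lift_ι_apply]

theorem commute_TLAincl_TLAincl_EA_last {m : ℕ} (x : TLA m) :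
    Commute (TLAincl (m + 1) (TLAincl m x)) (EA (Fin.last (m + 1))) := by
  have hx : TLAincl (m + 1) (TLAincl m x) ∈
      Algebra.adjoin 𝕂 (Set.range fun i : Fin m ↦ EA i.castSucc.castSucc) := by
    have h := Subalgebra.mem_map.mpr ⟨x, adjoin_range_EA m ▸ Algebra.mem_top,
      AlgHom.comp_apply (TLAincl (m + 1)) (TLAincl m) x⟩
    rw [AlgHom.map_adjoin, ← Set.range_comp] at h
    simpa only [Function.comp_def, AlgHom.comp_apply, TLAincl_EA] using h
  refine (Algebra.commute_of_mem_adjoin_of_forall_mem_commute hx ?_).symm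
  rintro _ ⟨i, rfl⟩
  exact commute_EA (.inr (by simp))

/-- The augmentation of `TL^A_{m+1}`: the algebra map to `ℂ(q)` sending every `e_i` to zero. It
detects that the Jones–Wenzl projections do not vanish. -/
def TLAaug (m : ℕ) : TLA m →ₐ[𝕂] 𝕂 :=
  RingQuot.liftAlgHom 𝕂
    ⟨FreeAlgebra.lift 𝕂 fun _ ↦ 0, by rintro _ _ (_ | _ | _) <;> simp⟩

theorem TLAaug_EA {m : ℕ} (i : Fin m) : TLAaug m (EA i) = 0 := by
  rw [TLAaug, EA, RingQuot.liftAlgHom_mkAlgHom_apply, FreeAlgebra.lift_ι_apply]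

theorem TLAaug_comp_TLAincl (m : ℕ) : (TLAaug (m + 1)).comp (TLAincl m) = TLAaug m := by
  refine AlgHom.ext_of_adjoin_eq_top (adjoin_range_EA m) ?_
  rintro _ ⟨i, rfl⟩
  rw [AlgHom.comp_apply, TLAincl_EA, TLAaug_EA, TLAaug_EA]

theorem JW_succ (m : ℕ) :
    JW (m + 1) =
      wenzlStep (qInt (m + 1) / qInt (m + 2)) (TLAincl m (JW m)) (EA (Fin.last m)) :=
  rfl

theorem TLAaug_JW (m : ℕ) : TLAaug m (JW m) = 1 := by
  induction m with
  | zero => exact map_one _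
  | succ m ih =>
    have hincl : TLAaug (m + 1) (TLAincl m (JW m)) = 1 :=
      (DFunLike.congr_fun (TLAaug_comp_TLAincl m) (JW m)).trans ih
    rw [JW_succ, map_wenzlStep, hincl, TLAaug_EA, wenzlStep, mul_zero, zero_mul, smul_zero,
      add_zero]

theorem JW_ne_zero (m : ℕ) : JW m ≠ 0 := fun h ↦
  zero_ne_one (by rw [← TLAaug_JW m, h, map_zero])

/-- The projection `P^{(m)}` viewed in `TL^A_{m+2}`, two strands up, as it occurs in the partial
trace identity for `P^{(m+1)} = JW m`. The missing `P^{(0)}` is taken to be `1`. -/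
def JWPrev : (m : ℕ) → TLA (m + 1)
  | 0 => 1
  | m + 1 => TLAincl (m + 1) (TLAincl m (JW m))

theorem commute_JWPrev_EA_last (m : ℕ) : Commute (JWPrev m) (EA (Fin.last m)) := by
  cases m with
  | zero => exact Commute.one_left _
  | succ m => exact commute_TLAincl_TLAincl_EA_last (JW m)

theorem TLAincl_JW_succ (m : ℕ) :
    TLAincl (m + 1) (JW (m + 1)) =
      wenzlStep (qInt (m + 1) / qInt (m + 2)) (JWPrev (m + 1)) (EA (Fin.last m).castSucc) := by
  rw [JW_succ, map_wenzlStep, TLAincl_EA, JWPrev]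

theorem JWPrev_mul_TLAincl_JW {m : ℕ} (h : IsIdempotentElem (JWPrev m)) :
    JWPrev m * TLAincl m (JW m) = TLAincl m (JW m) := by
  cases m with
  | zero => exact one_mul _
  | succ m => rw [TLAincl_JW_succ, mul_wenzlStep h]

theorem TLAincl_JW_mul_JWPrev {m : ℕ} (h : IsIdempotentElem (JWPrev m)) :
    TLAincl m (JW m) * JWPrev m = TLAincl m (JW m) := by
  cases m with
  | zero => exact mul_one _
  | succ m => rw [TLAincl_JW_succ, wenzlStep_mul h]

theorem EA_last_mul_TLAincl_JW_mul_EA_last {m : ℕ} (h : IsIdempotentElem (JWPrev m)) :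
    EA (Fin.last m) * TLAincl m (JW m) * EA (Fin.last m) =
      -(qInt (m + 2) / qInt (m + 1)) • (JWPrev m * EA (Fin.last m)) := by
  cases m with
  | zero => simp [JW, JWPrev, EA_mul_self, qInt_one, qInt_two]
  | succ m =>
    rw [TLAincl_JW_succ, mul_wenzlStep_mul_of_commute h (commute_JWPrev_EA_last (m + 1))
      (EA_mul_EA_mul_EA (.inr (by simp))) (EA_mul_self _)]
    have hcoeff := qInt_div_sub_two (n := m + 1) (by lia)
    rw [add_assoc (m : ℤ) 1 1, one_add_one_eq_two] at hcoeff
    push_cast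
    rw [hcoeff, add_assoc (m : ℤ) 1 1, one_add_one_eq_two]

theorem smul_EA_last_mul_TLAincl_JW_mul_EA_last {m : ℕ} (h : IsIdempotentElem (JWPrev m)) :
    (qInt (m + 1) / qInt (m + 2)) • (EA (Fin.last m) * TLAincl m (JW m) * EA (Fin.last m)) =
      -(JWPrev m * EA (Fin.last m)) := by
  have h₁ : qInt (m + 1) ≠ 0 := qInt_ne_zero (by lia)
  have h₂ : qInt (m + 2) ≠ 0 := qInt_ne_zero (by lia)
  rw [EA_last_mul_TLAincl_JW_mul_EA_last h, smul_smul, mul_neg, div_mul_div_cancel₀ h₂,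
    div_self h₁, neg_one_smul]

theorem EA_last_mul_JW_succ {m : ℕ} (h : IsIdempotentElem (JWPrev m)) :
    EA (Fin.last m) * JW (m + 1) = 0 :=
  generator_mul_wenzlStep (commute_JWPrev_EA_last m) (JWPrev_mul_TLAincl_JW h)
    (smul_EA_last_mul_TLAincl_JW_mul_EA_last h)

theorem JW_succ_mul_EA_last {m : ℕ} (h : IsIdempotentElem (JWPrev m)) :
    JW (m + 1) * EA (Fin.last m) = 0 :=
  wenzlStep_mul_generator (TLAincl_JW_mul_JWPrev h) (smul_EA_last_mul_TLAincl_JW_mul_EA_last h)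

theorem isIdempotentElem_JWPrev_and_JW (m : ℕ) :
    IsIdempotentElem (JWPrev m) ∧ IsIdempotentElem (JW m) := by
  induction m with
  | zero => exact ⟨.one, .one⟩
  | succ m ih =>
    obtain ⟨hprev, hJW⟩ := ih
    exact ⟨(hJW.map (TLAincl m)).map (TLAincl (m + 1)),
      isIdempotentElem_wenzlStep (hJW.map (TLAincl m)) (EA_last_mul_JW_succ hprev)⟩

theorem isIdempotentElem_JWPrev (m : ℕ) : IsIdempotentElem (JWPrev m) :=
  (isIdempotentElem_JWPrev_and_JW m).1

theorem isIdempotentElem_JW (m : ℕ) : IsIdempotentElem (JW m) :=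
  (isIdempotentElem_JWPrev_and_JW m).2

theorem EA_mul_JW {m : ℕ} (i : Fin m) : EA i * JW m = 0 := by
  induction m with
  | zero => exact i.elim0
  | succ m ih =>
    cases i using Fin.lastCases with
    | last => exact EA_last_mul_JW_succ (isIdempotentElem_JWPrev m)
    | cast i =>
      rw [JW_succ, ← mul_wenzlStep ((isIdempotentElem_JW m).map (TLAincl m)), ← mul_assoc,
        ← TLAincl_EA, ← map_mul, ih, map_zero, zero_mul]

theorem JW_mul_EA {m : ℕ} (i : Fin m) : JW m * EA i = 0 := by
  induction m with
  | zero => exact i.elim0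
  | succ m ih =>
    cases i using Fin.lastCases with
    | last => exact JW_succ_mul_EA_last (isIdempotentElem_JWPrev m)
    | cast i =>
      rw [JW_succ, ← wenzlStep_mul ((isIdempotentElem_JW m).map (TLAincl m)), mul_assoc,
        ← TLAincl_EA, ← map_mul, ih, map_zero, mul_zero]

/-- The recursively defined elements `P^{(n)} = JW (n-1)`
(`P^{(1)} = 1`, `P^{(n+1)} = P^{(n)} + ([n]/[n+1]) P^{(n)} e_n P^{(n)}`) satisfy
`P^{(n)} ≠ 0`, `P^{(n)}·P^{(n)} = P^{(n)}` and `e_i·P^{(n)} = P^{(n)}·e_i = 0` for all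
`1 ≤ i ≤ n-1`; hence `P^{(n)}` is the Jones–Wenzl projection. -/
theorem JW_is_jones_wenzl (n : ℕ) (hn : 1 ≤ n) :
    JW (n - 1) ≠ 0 ∧ JW (n - 1) * JW (n - 1) = JW (n - 1) ∧
      ∀ i : Fin (n - 1), EA i * JW (n - 1) = 0 ∧ JW (n - 1) * EA i = 0 :=
  ⟨JW_ne_zero _, isIdempotentElem_JW _, fun i ↦ ⟨EA_mul_JW i, JW_mul_EA i⟩⟩
end
end

section
/- The elements Q^{(n)} ∈ TL^B_n defined recursively by Q^{(0)} = 1 and Q^{(n+1)} = Q^{(n)} + ([n]_s/[n+1]_s)·Q^{(n)} e_n Q^{(n)} satisfy, for every n ≥ 0: Q^{(n)} ≠ 0, Q^{(n)}·Q^{(n)} = Q^{(n)}, and e_i·Q^{(n)} = Q^{(n)}·e_i = 0 for all 0 ≤ i ≤ n−1; hence Q^{(n)} is the Jones–Wenzl projection of type B. -/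
noncomputable section
open scoped Classical

/-! ### The field `ℂ(q,s)` and two-variable quantum integers -/

/-- The field `ℂ(q,s)` of rational functions in two variables. -/
abbrev 𝕃 : Type := FractionRing (MvPolynomial (Fin 2) ℂ)

/-- The variable `q`. -/
def qB : 𝕃 := algebraMap (MvPolynomial (Fin 2) ℂ) 𝕃 (MvPolynomial.X 0)

/-- The variable `s`. -/
def sB : 𝕃 := algebraMap (MvPolynomial (Fin 2) ℂ) 𝕃 (MvPolynomial.X 1)

/-- The two-variable quantum integer `[n]_s`: `[0]_s = 1` and
`[n]_s = q^(n-1) s + q^(-(n-1)) s⁻¹` for `n ≥ 1`. -/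
def bqInt (n : ℤ) : 𝕃 := if n = 0 then 1 else qB ^ (n - 1) * sB + qB ^ (1 - n) * sB⁻¹

/-! ### The Temperley–Lieb algebra of type B and its Jones–Wenzl projections -/

/-- Defining relations of the Temperley–Lieb algebra `TL^B_n` of type B.
The generator indexed by `i : Fin n` represents `e_i` (labels `0, …, n-1`):
the type A relations among `e_1, …, e_{n-1}`, together with `e_0² = -[1]_s e_0`,
`e_1 e_0 e_1 = (q s⁻¹ + q⁻¹ s) e_1`, and `e_0 e_i = e_i e_0` for `i ≥ 2`. -/
inductive TLBrel (n : ℕ) : FreeAlgebra 𝕃 (Fin n) → FreeAlgebra 𝕃 (Fin n) → Prop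
  | sqA (i : Fin n) (h : 1 ≤ (i : ℕ)) :
      TLBrel n (FreeAlgebra.ι 𝕃 i * FreeAlgebra.ι 𝕃 i) ((-(qB + qB⁻¹)) • FreeAlgebra.ι 𝕃 i)
  | sq0 (i : Fin n) (h : (i : ℕ) = 0) :
      TLBrel n (FreeAlgebra.ι 𝕃 i * FreeAlgebra.ι 𝕃 i) ((-(bqInt 1)) • FreeAlgebra.ι 𝕃 i)
  | braidA (i j : Fin n) (hi : 1 ≤ (i : ℕ)) (hj : 1 ≤ (j : ℕ))
      (h : (j : ℕ) = i + 1 ∨ (i : ℕ) = j + 1) :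
      TLBrel n (FreeAlgebra.ι 𝕃 i * FreeAlgebra.ι 𝕃 j * FreeAlgebra.ι 𝕃 i) (FreeAlgebra.ι 𝕃 i)
  | braid0 (i j : Fin n) (hi : (i : ℕ) = 1) (hj : (j : ℕ) = 0) :
      TLBrel n (FreeAlgebra.ι 𝕃 i * FreeAlgebra.ι 𝕃 j * FreeAlgebra.ι 𝕃 i)
        ((qB * sB⁻¹ + qB⁻¹ * sB) • FreeAlgebra.ι 𝕃 i)
  | comm (i j : Fin n) (h : (i : ℕ) + 1 < j ∨ (j : ℕ) + 1 < i) :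
      TLBrel n (FreeAlgebra.ι 𝕃 i * FreeAlgebra.ι 𝕃 j) (FreeAlgebra.ι 𝕃 j * FreeAlgebra.ι 𝕃 i)

/-- The Temperley–Lieb algebra `TL^B_n` of type B, with generators `e_0, …, e_{n-1}`. -/
abbrev TLB (n : ℕ) : Type := RingQuot (TLBrel n)

/-- The generator `e_i` of `TL^B_n` (0-based labels). -/
def EB {n : ℕ} (i : Fin n) : TLB n := RingQuot.mkAlgHom 𝕃 (TLBrel n) (FreeAlgebra.ι 𝕃 i)

set_option synthInstance.maxHeartbeats 1000000 in
/-- The natural inclusion `TL^B_n → TL^B_{n+1}`, sending `e_i` to `e_i`. -/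
def TLBincl (n : ℕ) : TLB n →ₐ[𝕃] TLB (n + 1) :=
  RingQuot.liftAlgHom 𝕃
    ⟨FreeAlgebra.lift 𝕃 (fun i => EB i.castSucc), by
      intro x y h
      induction h with
      | sqA i h =>
          have h2 := RingQuot.mkAlgHom_rel 𝕃 (TLBrel.sqA i.castSucc (by simpa using h))
          simp only [map_mul, map_smul, FreeAlgebra.lift_ι_apply, EB] at h2 ⊢
          exact h2
      | sq0 i h =>
          have h2 := RingQuot.mkAlgHom_rel 𝕃 (TLBrel.sq0 i.castSucc (by simpa using h))
          simp only [map_mul, map_smul, FreeAlgebra.lift_ι_apply, EB] at h2 ⊢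
          exact h2
      | braidA i j hi hj h =>
          have h2 := RingQuot.mkAlgHom_rel 𝕃
            (TLBrel.braidA i.castSucc j.castSucc (by simpa using hi) (by simpa using hj)
              (by simpa using h))
          simp only [map_mul, FreeAlgebra.lift_ι_apply, EB] at h2 ⊢
          exact h2
      | braid0 i j hi hj =>
          have h2 := RingQuot.mkAlgHom_rel 𝕃
            (TLBrel.braid0 i.castSucc j.castSucc (by simpa using hi) (by simpa using hj))
          simp only [map_mul, map_smul, FreeAlgebra.lift_ι_apply, EB] at h2 ⊢
          exact h2
      | comm i j h =>
          have h2 := RingQuot.mkAlgHom_rel 𝕃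
            (TLBrel.comm i.castSucc j.castSucc (by simpa using h))
          simp only [map_mul, FreeAlgebra.lift_ι_apply, EB] at h2 ⊢
          exact h2⟩

/-- The iterated natural inclusion `TL^B_n → TL^B_{n+k}`. -/
def TLBinclIter (n : ℕ) : (k : ℕ) → TLB n →ₐ[𝕃] TLB (n + k)
  | 0 => AlgHom.id 𝕃 (TLB n)
  | k + 1 => (TLBincl (n + k)).comp (TLBinclIter n k)

/-- The type B Jones–Wenzl projection `Q^{(n)} ∈ TL^B_n`, via the recurrence
`Q^{(0)} = 1`, `Q^{(n+1)} = Q^{(n)} + ([n]_s/[n+1]_s) Q^{(n)} e_n Q^{(n)}`. -/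
def JWB : (n : ℕ) → TLB n
  | 0 => 1
  | n + 1 =>
      TLBincl n (JWB n) +
        (bqInt n / bqInt (n + 1)) •
          (TLBincl n (JWB n) * EB (Fin.last n) * TLBincl n (JWB n))

/-!
Write `Q n` for the Wenzl sequence of generators `e i` with `e i ^ 2 = δ i • e i` and
`e (i + 1) * e i * e (i + 1) = κ i • e (i + 1)`. Since `Q n` only involves `e i` with `i < n`, it
commutes with `e (n + 1)`, and compressing the recursion for `Q (n + 1)` between two copies of
`e (n + 1)` gives the partial trace formula
`e (n + 1) * Q (n + 1) * e (n + 1) = (δ (n + 1) + c n * κ n) • (e (n + 1) * Q n)`.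
The coefficient `c (n + 1)` is chosen to be minus the inverse of this scalar, which makes
`e (n + 1) * Q (n + 2)` vanish; in type B this choice is the three-term recurrence of `[n]_s`.
Idempotency follows from left annihilation, and right annihilation from left annihilation in the
opposite algebra. Finally `Q n ≠ 0` because the augmentation `e i ↦ 0` sends it to `1`.
-/

section Wenzl

variable {K A : Type*} [CommSemiring K] [Semiring A] [Algebra K A]

/-- The Wenzl recursion `Q 0 = 1`, `Q (n + 1) = Q n + c n • (Q n * e n * Q n)` in an arbitrary
algebra, with coefficients `c` and generators `e`. -/
def wenzlSeq (c : ℕ → K) (e : ℕ → A) : ℕ → A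
  | 0 => 1
  | n + 1 => wenzlSeq c e n + c n • (wenzlSeq c e n * e n * wenzlSeq c e n)

/-- A sequence of generators of Temperley–Lieb type with parameters `δ` and `κ`. The braid
relation is imposed one-sidedly, with the larger index outside. -/
structure IsTemperleyLieb (δ κ : ℕ → K) (e : ℕ → A) : Prop where
  mul_self : ∀ n, e n * e n = δ n • e n
  braid : ∀ n, e (n + 1) * e n * e (n + 1) = κ n • e (n + 1)
  commute : ∀ i j, i + 1 < j → Commute (e i) (e j)

/-- The coefficients for which `wenzlSeq` is annihilated by Temperley–Lieb generators with
parameters `δ` and `κ`: each `c n` is minus the inverse of the scalar by which `e n` compresses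
the `n`-th term. -/
structure IsWenzlCoeff (δ κ c : ℕ → K) : Prop where
  zero : 1 + c 0 * δ 0 = 0
  succ : ∀ n, 1 + c (n + 1) * (δ (n + 1) + c n * κ n) = 0

variable {δ κ c : ℕ → K} {e : ℕ → A} {n : ℕ}

theorem wenzlSeq_zero_generators (c : ℕ → K) (n : ℕ) : wenzlSeq c (0 : ℕ → A) n = 1 := by
  induction n with
  | zero => rfl
  | succ n ih => simp [wenzlSeq, ih]

theorem op_wenzlSeq (c : ℕ → K) (e : ℕ → A) (n : ℕ) :
    MulOpposite.op (wenzlSeq c e n) = wenzlSeq c (fun i => MulOpposite.op (e i)) n := by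
  induction n with
  | zero => rfl
  | succ n ih => simp [wenzlSeq, ← ih, mul_assoc]

theorem commute_wenzlSeq (c : ℕ → K) {x : A} (h : ∀ i < n, Commute (e i) x) :
    Commute (wenzlSeq c e n) x := by
  induction n with
  | zero => exact Commute.one_left x
  | succ n ih =>
    have hQ := ih fun i hi => h i (by omega)
    exact hQ.add_left (((hQ.mul_left (h n n.lt_succ_self)).mul_left hQ).smul_left (c n))

theorem wenzlSeq_succ_mul (c : ℕ → K) (e : ℕ → A) (n : ℕ) (x : A) :
    wenzlSeq c e (n + 1) * x =
      wenzlSeq c e n * x + c n • (wenzlSeq c e n * (e n * (wenzlSeq c e n * x))) := by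
  rw [wenzlSeq, add_mul, smul_mul_assoc, mul_assoc, mul_assoc]

theorem mul_wenzlSeq_succ (c : ℕ → K) (e : ℕ → A) (n : ℕ) (x : A) :
    x * wenzlSeq c e (n + 1) =
      x * wenzlSeq c e n + c n • (x * wenzlSeq c e n * e n * wenzlSeq c e n) := by
  rw [wenzlSeq, mul_add, mul_smul_comm, ← mul_assoc, ← mul_assoc]

theorem wenzlSeq_mul_succ (hQ : IsIdempotentElem (wenzlSeq c e n)) :
    wenzlSeq c e n * wenzlSeq c e (n + 1) = wenzlSeq c e (n + 1) := by
  rw [mul_wenzlSeq_succ, hQ.eq, wenzlSeq]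

namespace IsTemperleyLieb

theorem op (he : IsTemperleyLieb δ κ e) :
    IsTemperleyLieb δ κ fun i => MulOpposite.op (e i) where
  mul_self n := by rw [← MulOpposite.op_mul, he.mul_self, MulOpposite.op_smul]
  braid n := by
    rw [← MulOpposite.op_mul, ← MulOpposite.op_mul, ← mul_assoc, he.braid, MulOpposite.op_smul]
  commute i j hij := (he.commute i j hij).op

theorem commute_wenzlSeq_succ (he : IsTemperleyLieb δ κ e) (c : ℕ → K) (n : ℕ) :
    Commute (wenzlSeq c e n) (e (n + 1)) :=
  commute_wenzlSeq c fun i hi => he.commute i (n + 1) (by omega)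

theorem compress_wenzlSeq_succ (he : IsTemperleyLieb δ κ e)
    (hQ : IsIdempotentElem (wenzlSeq c e n)) :
    e (n + 1) * wenzlSeq c e (n + 1) * e (n + 1) =
      (δ (n + 1) + c n * κ n) • (e (n + 1) * wenzlSeq c e n) := by
  have hcomm := (he.commute_wenzlSeq_succ c n).eq
  set Q := wenzlSeq c e n
  set f := e (n + 1)
  have hQf : f * Q * f = δ (n + 1) • (f * Q) := by
    rw [mul_assoc, hcomm, ← mul_assoc, he.mul_self, smul_mul_assoc]
  have hQeQ : f * (Q * e n * Q) * f = κ n • (f * Q) :=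
    calc f * (Q * e n * Q) * f
        = (f * Q) * e n * (Q * f) := by simp only [mul_assoc]
      _ = (Q * f) * e n * (f * Q) := by rw [hcomm]
      _ = Q * (f * e n * f) * Q := by simp only [mul_assoc]
      _ = κ n • (f * Q) := by
        rw [he.braid, mul_smul_comm, smul_mul_assoc, hcomm, mul_assoc, hQ.eq]
  calc f * (Q + c n • (Q * e n * Q)) * f
      = f * Q * f + c n • (f * (Q * e n * Q) * f) := by
        rw [mul_add, add_mul, mul_smul_comm, smul_mul_assoc]
    _ = (δ (n + 1) + c n * κ n) • (f * Q) := by rw [hQf, hQeQ, smul_smul, ← add_smul]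

theorem generator_mul_wenzlSeq_succ (he : IsTemperleyLieb δ κ e) (hc : IsWenzlCoeff δ κ c)
    (hQ : ∀ k < n, IsIdempotentElem (wenzlSeq c e k)) :
    e n * wenzlSeq c e (n + 1) = 0 := by
  suffices ∃ t, 1 + c n * t = 0 ∧
      e n * wenzlSeq c e n * e n * wenzlSeq c e n = t • (e n * wenzlSeq c e n) by
    obtain ⟨t, ht, hcompress⟩ := this
    calc e n * wenzlSeq c e (n + 1)
        = e n * wenzlSeq c e n + c n • (e n * wenzlSeq c e n * e n * wenzlSeq c e n) :=
          mul_wenzlSeq_succ c e n (e n)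
      _ = (1 + c n * t) • (e n * wenzlSeq c e n) := by
          rw [hcompress, smul_smul, add_smul, one_smul]
      _ = 0 := by rw [ht, zero_smul]
  cases n with
  | zero => exact ⟨δ 0, hc.zero, by simp [wenzlSeq, he.mul_self]⟩
  | succ n =>
    have hQn := hQ n n.lt_succ_self
    refine ⟨δ (n + 1) + c n * κ n, hc.succ n, ?_⟩
    rw [he.compress_wenzlSeq_succ hQn, smul_mul_assoc, mul_assoc, wenzlSeq_mul_succ hQn]

theorem isIdempotentElem_wenzlSeq (he : IsTemperleyLieb δ κ e) (hc : IsWenzlCoeff δ κ c)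
    (n : ℕ) : IsIdempotentElem (wenzlSeq c e n) := by
  induction n using Nat.strong_induction_on with
  | _ n ih =>
    cases n with
    | zero => exact IsIdempotentElem.one
    | succ n =>
      have hleft : wenzlSeq c e n * wenzlSeq c e (n + 1) = wenzlSeq c e (n + 1) :=
        wenzlSeq_mul_succ (ih n n.lt_succ_self)
      have hzero : e n * wenzlSeq c e (n + 1) = 0 :=
        he.generator_mul_wenzlSeq_succ hc fun k hk => ih k (by omega)
      calc wenzlSeq c e (n + 1) * wenzlSeq c e (n + 1)
          = wenzlSeq c e n * wenzlSeq c e (n + 1) +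
              c n • (wenzlSeq c e n * (e n * (wenzlSeq c e n * wenzlSeq c e (n + 1)))) :=
            wenzlSeq_succ_mul c e n _
        _ = wenzlSeq c e (n + 1) := by rw [hleft, hzero, mul_zero, smul_zero, add_zero]

theorem generator_mul_wenzlSeq (he : IsTemperleyLieb δ κ e) (hc : IsWenzlCoeff δ κ c) {i : ℕ}
    (hi : i < n) : e i * wenzlSeq c e n = 0 := by
  induction n, hi using Nat.le_induction with
  | base =>
    exact he.generator_mul_wenzlSeq_succ hc fun k _ => he.isIdempotentElem_wenzlSeq hc k
  | succ n _ ih =>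
    rw [mul_wenzlSeq_succ, ih, zero_mul, zero_mul, smul_zero, add_zero]

theorem wenzlSeq_mul_generator (he : IsTemperleyLieb δ κ e) (hc : IsWenzlCoeff δ κ c) {i : ℕ}
    (hi : i < n) : wenzlSeq c e n * e i = 0 :=
  MulOpposite.op_injective <| by
    rw [MulOpposite.op_mul, op_wenzlSeq, he.op.generator_mul_wenzlSeq hc hi, MulOpposite.op_zero]

end IsTemperleyLieb

end Wenzl

theorem IsWenzlCoeff.of_recurrence {F : Type*} [Field F] {δ κ b : ℕ → F}
    (hb : ∀ n, b (n + 1) ≠ 0) (hzero : b 1 + b 0 * δ 0 = 0)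
    (hrec : ∀ n, b (n + 2) + δ (n + 1) * b (n + 1) + κ n * b n = 0) :
    IsWenzlCoeff δ κ fun n => b n / b (n + 1) where
  zero := by
    have h1 := hb 0
    field_simp
    simpa using hzero
  succ n := by
    have h1 := hb n
    have h2 := hb (n + 1)
    field_simp
    linear_combination hrec n

section QuantumIntegers

theorem qB_ne_zero : qB ≠ 0 := by
  simp [qB]

theorem sB_ne_zero : sB ≠ 0 := by
  simp [sB]

theorem bqInt_zero : bqInt 0 = 1 :=
  if_pos rfl

theorem bqInt_natCast_succ (n : ℕ) :
    bqInt (n + 1 : ℕ) = qB ^ n * sB + (qB ^ n * sB)⁻¹ := by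
  rw [bqInt, if_neg (by omega), Nat.cast_succ, add_sub_cancel_right, sub_add_cancel_right,
    zpow_neg, zpow_natCast, mul_inv]

theorem sq_qB_pow_mul_sB_add_one_ne_zero (n : ℕ) : (qB ^ n * sB) ^ 2 + 1 ≠ 0 := by
  intro h
  have hpoly : ((MvPolynomial.X 0 ^ n * MvPolynomial.X 1) ^ 2 + 1 :
      MvPolynomial (Fin 2) ℂ) = 0 :=
    IsFractionRing.injective _ 𝕃 (by simpa [qB, sB] using h)
  simpa using congrArg (MvPolynomial.eval 0) hpoly

theorem bqInt_natCast_succ_ne_zero (n : ℕ) : bqInt (n + 1 : ℕ) ≠ 0 := by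
  have hx : qB ^ n * sB ≠ 0 := mul_ne_zero (pow_ne_zero n qB_ne_zero) sB_ne_zero
  intro h
  apply sq_qB_pow_mul_sB_add_one_ne_zero n
  rw [sq, ← mul_inv_cancel₀ hx, ← mul_add, ← bqInt_natCast_succ, h, mul_zero]

/-- The scalars `δ i` in the relations `e_i² = δ i • e_i` of type B. -/
def sqCoeffB : ℕ → 𝕃
  | 0 => -bqInt 1
  | _ + 1 => -(qB + qB⁻¹)

/-- The scalars `κ i` in the relations `e_{i+1} e_i e_{i+1} = κ i • e_{i+1}` of type B. -/
def braidCoeffB : ℕ → 𝕃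
  | 0 => qB * sB⁻¹ + qB⁻¹ * sB
  | _ + 1 => 1

theorem bqInt_add_two (n : ℕ) :
    bqInt (n + 2 : ℕ) = (qB + qB⁻¹) * bqInt (n + 1 : ℕ) - braidCoeffB n * bqInt n := by
  have hq := qB_ne_zero
  have hs := sB_ne_zero
  rw [bqInt_natCast_succ (n + 1), bqInt_natCast_succ n]
  cases n with
  | zero =>
    rw [braidCoeffB, Nat.cast_zero, bqInt_zero]
    field_simp
    ring
  | succ n =>
    rw [braidCoeffB, bqInt_natCast_succ n]
    field_simp
    ring

theorem isWenzlCoeff_bqInt :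
    IsWenzlCoeff sqCoeffB braidCoeffB fun n => bqInt n / bqInt (n + 1 : ℕ) :=
  .of_recurrence (b := fun n => bqInt n) bqInt_natCast_succ_ne_zero
    (by simp [bqInt_zero, sqCoeffB])
    fun n => by
      simp only [bqInt_add_two, sqCoeffB]
      ring

end QuantumIntegers

section TypeB

variable {n : ℕ}

theorem EB_mul_self (i : Fin n) : EB i * EB i = sqCoeffB i • EB i := by
  obtain ⟨_ | i, hi⟩ := i
  · simpa only [map_mul, map_smul, EB, sqCoeffB] using
      RingQuot.mkAlgHom_rel 𝕃 (TLBrel.sq0 ⟨0, hi⟩ rfl)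
  · simpa only [map_mul, map_smul, EB, sqCoeffB] using
      RingQuot.mkAlgHom_rel 𝕃 (TLBrel.sqA ⟨i + 1, hi⟩ (Nat.le_add_left 1 i))

theorem EB_braid {i : ℕ} (hi : i + 1 < n) :
    EB ⟨i + 1, hi⟩ * EB ⟨i, by omega⟩ * EB ⟨i + 1, hi⟩ =
      braidCoeffB i • (EB ⟨i + 1, hi⟩ : TLB n) := by
  cases i with
  | zero =>
    simpa only [map_mul, map_smul, EB, braidCoeffB] using
      RingQuot.mkAlgHom_rel 𝕃 (TLBrel.braid0 ⟨1, hi⟩ ⟨0, by omega⟩ rfl rfl)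
  | succ i =>
    simpa only [map_mul, EB, braidCoeffB, one_smul] using
      RingQuot.mkAlgHom_rel 𝕃 (TLBrel.braidA ⟨i + 2, hi⟩ ⟨i + 1, by omega⟩
        (Nat.le_add_left 1 _) (Nat.le_add_left 1 _) (Or.inr rfl))

theorem commute_EB {i j : Fin n} (hij : (i : ℕ) + 1 < j) : Commute (EB i) (EB j) := by
  simpa only [map_mul, EB, Commute, SemiconjBy] using
    RingQuot.mkAlgHom_rel 𝕃 (TLBrel.comm i j (Or.inl hij))

/-- The generators of `TL^B_n` as a sequence indexed by `ℕ`. Extending by zero keeps all the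
Temperley–Lieb relations valid. -/
def generatorB (n i : ℕ) : TLB n :=
  if hi : i < n then EB ⟨i, hi⟩ else 0

theorem generatorB_of_lt {i : ℕ} (hi : i < n) : generatorB n i = EB ⟨i, hi⟩ :=
  dif_pos hi

theorem generatorB_of_le {i : ℕ} (hi : n ≤ i) : generatorB n i = 0 :=
  dif_neg hi.not_gt

theorem isTemperleyLieb_generatorB (n : ℕ) :
    IsTemperleyLieb sqCoeffB braidCoeffB (generatorB n) where
  mul_self i := by
    rcases lt_or_ge i n with hi | hi
    · simpa only [generatorB_of_lt hi] using EB_mul_self ⟨i, hi⟩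
    · rw [generatorB_of_le hi, mul_zero, smul_zero]
  braid i := by
    rcases lt_or_ge (i + 1) n with hi | hi
    · rw [generatorB_of_lt hi, generatorB_of_lt (Nat.lt_of_succ_lt hi), EB_braid hi]
    · rw [generatorB_of_le hi, mul_zero, smul_zero]
  commute i j hij := by
    rcases lt_or_ge j n with hj | hj
    · rw [generatorB_of_lt hj, generatorB_of_lt (by omega : i < n)]
      exact commute_EB hij
    · rw [generatorB_of_le hj]
      exact Commute.zero_right _

theorem TLBincl_EB (i : Fin n) : TLBincl n (EB i) = EB i.castSucc := by
  rw [TLBincl, EB, RingQuot.liftAlgHom_mkAlgHom_apply, FreeAlgebra.lift_ι_apply]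

theorem map_JWB {A : Type*} [Semiring A] [Algebra 𝕃 A] {e : ℕ → A} (φ : TLB n →ₐ[𝕃] A)
    (hφ : ∀ i : Fin n, φ (EB i) = e i) :
    φ (JWB n) = wenzlSeq (fun k => bqInt k / bqInt (k + 1 : ℕ)) e n := by
  induction n with
  | zero => exact map_one φ
  | succ n ih =>
    have hincl := ih (φ.comp (TLBincl n)) fun i => by
      rw [AlgHom.comp_apply, TLBincl_EB, hφ, Fin.val_castSucc]
    rw [AlgHom.comp_apply] at hincl
    rw [JWB, map_add, map_smul, map_mul, map_mul, hincl, hφ, wenzlSeq, Fin.val_last,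
      Nat.cast_succ]

theorem JWB_eq_wenzlSeq (n : ℕ) :
    JWB n = wenzlSeq (fun k => bqInt k / bqInt (k + 1 : ℕ)) (generatorB n) n :=
  map_JWB (AlgHom.id 𝕃 (TLB n)) fun i => (generatorB_of_lt i.isLt).symm

/-- The augmentation of `TL^B_n`, the character sending every generator to `0`. -/
def augmentationB (n : ℕ) : TLB n →ₐ[𝕃] 𝕃 :=
  RingQuot.liftAlgHom 𝕃 ⟨FreeAlgebra.lift 𝕃 0, fun _ _ h => by induction h <;> simp⟩

theorem augmentationB_EB (i : Fin n) : augmentationB n (EB i) = 0 := by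
  rw [augmentationB, EB, RingQuot.liftAlgHom_mkAlgHom_apply, FreeAlgebra.lift_ι_apply,
    Pi.zero_apply]

theorem augmentationB_JWB (n : ℕ) : augmentationB n (JWB n) = 1 := by
  rw [map_JWB (e := 0) (augmentationB n) augmentationB_EB, wenzlSeq_zero_generators]

theorem JWB_ne_zero (n : ℕ) : JWB n ≠ 0 := by
  intro h
  simpa [h] using augmentationB_JWB n

end TypeB

/-- For every `n ≥ 0` the element `Q^{(n)}` satisfies `Q^{(n)} ≠ 0`,
`Q^{(n)}·Q^{(n)} = Q^{(n)}` and `e_i·Q^{(n)} = Q^{(n)}·e_i = 0` for all `0 ≤ i ≤ n-1`;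
hence `Q^{(n)}` is the Jones–Wenzl projection of type B. -/
theorem JWB_is_jones_wenzl (n : ℕ) :
    JWB n ≠ 0 ∧ JWB n * JWB n = JWB n ∧
      ∀ i : Fin n, EB i * JWB n = 0 ∧ JWB n * EB i = 0 := by
  have he := isTemperleyLieb_generatorB n
  have hc := isWenzlCoeff_bqInt
  refine ⟨JWB_ne_zero n, ?_, fun i => ?_⟩
  · rw [JWB_eq_wenzlSeq]
    exact he.isIdempotentElem_wenzlSeq hc n
  · rw [JWB_eq_wenzlSeq, ← generatorB_of_lt i.isLt]
    exact ⟨he.generator_mul_wenzlSeq hc i.isLt, he.wenzlSeq_mul_generator hc i.isLt⟩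
end
end
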